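/- Let d ≥ 2, let X be an ℝ^d-valued random vector with E‖X‖³ < ∞ whose law has no atoms and is not supported on any line, and let u be a unit vector in ℝ^d. For each α ∈ (0,1) let q(α) denote the (unique) geometric quantile q_X(αu), i.e. the minimizer of f_{αu}. Let μ = E[X] and let Σ be the covariance matrix of X. Then, as α → 1⁻, ‖q(α)‖·( ‖q(α)‖²·(1−α) − (1/2)·(tr Σ − ⟨Σu,u⟩) ) converges to E[⟨X,u⟩·‖X − ⟨X,u⟩u‖²] − ⟨2Σu + ⟨μ,u⟩·μ, μ − ⟨μ,u⟩u⟩. -/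

import Mathlib

/-!
The minimizer `q` is written in coordinates adapted to `u`: its height `a = ⟨q, u⟩` and its
transverse part `b = q - a u`, and similarly `X = X_u u + X_⊥`. As the law of `X` has no atoms, the
objective is differentiable and minimality gives `E[(q - X) / ‖q - X‖] = α u`
(`integral_unitDir_of_minimizer`). As `X` is not carried by a line, this forces `‖q‖ → ∞`
(`tendsto_norm_atTop`). Comparing directions to `X` with the direction to the origin then gives
`‖‖q‖ α u - q‖ ≤ 2 E‖X‖`, so `b` is bounded and `a → ∞`.

The transverse component of the stationarity equation gives `b = μ_⊥ + O(1/a)`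
(`height_mul_norm_transverse_sub_le`). Its component along `u` reads
`1 - α = E[1 - (a - X_u) / ‖q - X‖]`, and here the integrand expands as
`½ |b - X_⊥|² a⁻² + X_u |b - X_⊥|² a⁻³ + …`. The remainder after the first term, multiplied by `a³`,
is bounded by a cubic polynomial in `‖X‖` (`abs_remainder_le`) and converges pointwise
(`tendsto_remainder`), so dominated convergence yields
`a³ (1 - α) - ½ a E|b - X_⊥|² → E[X_u |μ_⊥ - X_⊥|²]`.

By the parallel axis identity `E|b - X_⊥|² = tr Σ - ⟨Σu, u⟩ + |b - μ_⊥|²`, whose last term is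
`O(1/a²)`; replacing `a` by `‖q‖ = √(a² + |b|²)` is harmless too (`tendsto_of_height`). Expanding the
square in the limit gives the stated form (`integral_third_moment`).
-/

open MeasureTheory Filter
open scoped RealInnerProductSpace ProbabilityTheory

/-- The objective function defining geometric quantiles:
`f_{αu}(q) = E[‖X−q‖ − ‖X‖] − α⟨u,q⟩`. -/
noncomputable def gqObj {d : ℕ} {Ω : Type*} [MeasureSpace Ω]
    (X : Ω → EuclideanSpace ℝ (Fin d)) (α : ℝ)
    (u q : EuclideanSpace ℝ (Fin d)) : ℝ :=
  (∫ ω, (‖X ω - q‖ - ‖X ω‖)) - α * ⟪u, q⟫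

/-- The mean vector `μ = E[X]`. -/
noncomputable def meanVec {d : ℕ} {Ω : Type*} [MeasureSpace Ω]
    (X : Ω → EuclideanSpace ℝ (Fin d)) : EuclideanSpace ℝ (Fin d) :=
  ∫ ω, X ω

/-- The covariance operator `Σ` of `X`, acting on a vector `v`:
`Σ v = E[⟨X − μ, v⟩ (X − μ)]`, so that `⟨Σ v, w⟩ = E[⟨X−μ,v⟩⟨X−μ,w⟩]`. -/
noncomputable def covOp {d : ℕ} {Ω : Type*} [MeasureSpace Ω]
    (X : Ω → EuclideanSpace ℝ (Fin d)) (v : EuclideanSpace ℝ (Fin d)) :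
    EuclideanSpace ℝ (Fin d) :=
  ∫ ω, ⟪X ω - meanVec X, v⟫ • (X ω - meanVec X)

/-- The trace of the covariance matrix: `tr Σ = E‖X − μ‖²`. -/
noncomputable def covTrace {d : ℕ} {Ω : Type*} [MeasureSpace Ω]
    (X : Ω → EuclideanSpace ℝ (Fin d)) : ℝ :=
  ∫ ω, ‖X ω - meanVec X‖ ^ 2

/-! ### Unit directions -/

section Geometry

variable {F : Type*} [NormedAddCommGroup F] [InnerProductSpace ℝ F]

/-- The unit vector pointing from `x` to `q`; it is `0` when `q = x`. -/
noncomputable def unitDir (q x : F) : F := ‖q - x‖⁻¹ • (q - x)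

lemma norm_unitDir_le (q x : F) : ‖unitDir q x‖ ≤ 1 := by
  rw [unitDir, norm_smul, norm_inv, norm_norm]
  exact inv_mul_le_one

lemma inner_unitDir (q x v : F) : ⟪unitDir q x, v⟫ = ⟪q - x, v⟫ / ‖q - x‖ := by
  rw [unitDir, real_inner_smul_left]; ring

lemma continuousAt_unitDir {q x : F} (h : x ≠ q) : ContinuousAt (fun p => unitDir p x) q := by
  have h0 : ‖q - x‖ ≠ 0 := norm_ne_zero_iff.2 (sub_ne_zero.2 h.symm)
  unfold unitDir
  fun_prop (disch := assumption)

lemma hasFDerivAt_norm_sub {q x : F} (h : x ≠ q) :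
    HasFDerivAt (fun p => ‖x - p‖) (innerSL ℝ (unitDir q x)) q := by
  have h0 : q - x ≠ 0 := sub_ne_zero.2 h.symm
  have h1 : ‖q - x‖ ≠ 0 := norm_ne_zero_iff.2 h0
  have h2 : HasFDerivAt (fun p : F => p - x) (ContinuousLinearMap.id ℝ F) q :=
    (hasFDerivAt_id q).sub_const x
  have h3 := h2.norm_sq.sqrt (by positivity)
  have h4 : (fun p => ‖x - p‖) = fun p => √(‖p - x‖ ^ 2) := by
    funext p; rw [Real.sqrt_sq (norm_nonneg _), norm_sub_rev]
  rw [h4]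
  convert h3 using 1
  ext v
  simp [unitDir]
  field_simp

/-- Seen from a point `q` at distance `r`, the direction to `x` differs from the direction to the
origin by at most `2‖x‖ / r`. -/
lemma norm_smul_unitDir_sub_le (q x : F) : ‖‖q‖ • unitDir q x - q‖ ≤ 2 * ‖x‖ := by
  by_cases h : q - x = 0
  · have : q = x := sub_eq_zero.1 h
    subst this
    simp [unitDir]; linarith [norm_nonneg q]
  have h1 : ‖q - x‖ ≠ 0 := norm_ne_zero_iff.2 h
  have e : ‖q‖ • unitDir q x - q = (‖q‖ - ‖q - x‖) • unitDir q x + (-x) := by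
    rw [sub_smul]
    have : ‖q - x‖ • unitDir q x = q - x := by
      rw [unitDir, smul_smul, mul_inv_cancel₀ h1, one_smul]
    rw [this]; abel
  rw [e]
  refine (norm_add_le _ _).trans ?_
  rw [norm_smul, norm_neg, Real.norm_eq_abs]
  have h2 : |‖q‖ - ‖q - x‖| ≤ ‖x‖ := by
    simpa using abs_norm_sub_norm_le q (q - x)
  nlinarith [norm_unitDir_le q x, abs_nonneg (‖q‖ - ‖q - x‖), norm_nonneg (unitDir q x)]

end Geometry

/-! ### Stationarity and escape to infinity -/

section Stationarity

variable {d : ℕ} {Ω : Type*} [MeasureSpace Ω] {X : Ω → EuclideanSpace ℝ (Fin d)}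

lemma measurable_unitDir (hX : Measurable X) (q : EuclideanSpace ℝ (Fin d)) :
    Measurable fun ω => unitDir q (X ω) := by
  unfold unitDir; fun_prop

lemma ae_ne_of_noAtoms (hX : Measurable X) (hatoms : NullSingletonClass (Measure.map X ℙ))
    (q : EuclideanSpace ℝ (Fin d)) : ∀ᵐ ω, X ω ≠ q := by
  have h : Measure.map X ℙ {q} = 0 := measure_singleton q
  rw [Measure.map_apply hX (measurableSet_singleton q)] at h
  rw [ae_iff]
  simpa [Set.preimage] using h

variable [IsProbabilityMeasure (ℙ : Measure Ω)]

lemma integrable_unitDir (hX : Measurable X) (q : EuclideanSpace ℝ (Fin d)) :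
    Integrable fun ω => unitDir q (X ω) :=
  Integrable.of_bound (measurable_unitDir hX q).aestronglyMeasurable 1
    (.of_forall fun ω => norm_unitDir_le q (X ω))

/-- Stationarity: since the law has no atoms, the objective is differentiable, and its gradient
`E[(q - X) / ‖q - X‖] - αu` vanishes at a minimizer. -/
lemma integral_unitDir_of_minimizer (hX : Measurable X) (hatoms : NullSingletonClass (Measure.map X ℙ))
    {α : ℝ} {u q : EuclideanSpace ℝ (Fin d)} (hq : ∀ p, gqObj X α u q ≤ gqObj X α u p) :
    ∫ ω, unitDir q (X ω) = α • u := by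
  have hmeas : ∀ p : EuclideanSpace ℝ (Fin d),
      AEStronglyMeasurable (fun ω => ‖X ω - p‖ - ‖X ω‖) ℙ := fun p => by
    have : Measurable (fun ω => ‖X ω - p‖ - ‖X ω‖) := by fun_prop
    exact this.aestronglyMeasurable
  have hint : Integrable (fun ω => ‖X ω - q‖ - ‖X ω‖) := by
    refine Integrable.of_bound (hmeas q) ‖q‖ (.of_forall fun ω => ?_)
    simpa using abs_norm_sub_norm_le (X ω - q) (X ω)
  have hU := integrable_unitDir hX q
  have hU' : Integrable (fun ω => innerSL ℝ (unitDir q (X ω))) :=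
    (innerSL ℝ (E := EuclideanSpace ℝ (Fin d))).integrable_comp hU
  have key := (hasFDerivAt_integral_of_dominated_loc_of_lip'
    (F := fun p ω => ‖X ω - p‖ - ‖X ω‖) (bound := fun _ => 1) Filter.univ_mem
    (fun p _ => hmeas p) hint hU'.aestronglyMeasurable
    (.of_forall fun ω p _ => by
      have := abs_norm_sub_norm_le (X ω - p) (X ω - q)
      rw [Real.norm_eq_abs, one_mul, norm_sub_rev p q]
      simpa using this)
    (integrable_const _)
    ((ae_ne_of_noAtoms hX hatoms q).mono fun ω hω =>
      (hasFDerivAt_norm_sub hω).sub_const _)).2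
  have hcomm : ∫ ω, innerSL ℝ (unitDir q (X ω)) = innerSL ℝ (∫ ω, unitDir q (X ω)) :=
    (innerSL ℝ (E := EuclideanSpace ℝ (Fin d))).integral_comp_comm hU
  rw [hcomm] at key
  have hlin : HasFDerivAt (fun p : EuclideanSpace ℝ (Fin d) => α * ⟪u, p⟫) (α • innerSL ℝ u) q :=
    ((innerSL ℝ u).hasFDerivAt).const_mul α
  have hmin : IsLocalMin (fun p => gqObj X α u p) q := .of_forall hq
  have h0 := hmin.hasFDerivAt_eq_zero (key.sub hlin)
  have h1 : innerSL ℝ (∫ ω, unitDir q (X ω)) = innerSL ℝ (α • u) := by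
    rw [map_smul]; exact sub_eq_zero.1 h0
  refine ext_inner_right ℝ fun v => ?_
  exact congrArg (fun L => L v) h1

/-- If the law is not carried by a line, then the expected unit direction has component `< 1`
along `u`: equality would place `X` almost surely on the line through `q` directed by `u`. -/
lemma integral_inner_unitDir_lt_one (hX : Measurable X)
    (hline : ¬ ∃ a b : EuclideanSpace ℝ (Fin d), ∀ᵐ ω, ∃ t : ℝ, X ω = a + t • b)
    {u : EuclideanSpace ℝ (Fin d)} (hu : ‖u‖ = 1) (q : EuclideanSpace ℝ (Fin d)) :
    ∫ ω, ⟪unitDir q (X ω), u⟫ < 1 := by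
  by_contra! hcon
  have hle : ∀ ω, ⟪unitDir q (X ω), u⟫ ≤ 1 := fun ω => by
    refine (real_inner_le_norm _ _).trans ?_
    rw [hu, mul_one]; exact norm_unitDir_le _ _
  have hint : Integrable fun ω => ⟪unitDir q (X ω), u⟫ := (integrable_unitDir hX q).inner_const u
  have hint' : Integrable fun ω => 1 - ⟪unitDir q (X ω), u⟫ := (integrable_const _).sub hint
  have hz : ∫ ω, (1 - ⟪unitDir q (X ω), u⟫) = 0 := by
    refine le_antisymm ?_ (integral_nonneg fun ω => sub_nonneg.2 (hle ω))
    rw [integral_sub (integrable_const _) hint]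
    simpa using hcon
  rw [integral_eq_zero_iff_of_nonneg (fun ω => sub_nonneg.2 (hle ω)) hint'] at hz
  refine hline ⟨q, u, hz.mono fun ω hω => ⟨-‖q - X ω‖, ?_⟩⟩
  have h1 : ⟪unitDir q (X ω), u⟫ = 1 := by
    have : 1 - ⟪unitDir q (X ω), u⟫ = 0 := hω
    linarith
  rw [inner_unitDir] at h1
  have hne : ‖q - X ω‖ ≠ 0 := by
    intro h; rw [h] at h1; simp at h1
  rw [div_eq_one_iff_eq hne] at h1
  have h2 : ⟪q - X ω, u⟫ = ‖q - X ω‖ * ‖u‖ := by rw [h1, hu, mul_one]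
  rw [inner_eq_norm_mul_iff_real, hu, one_smul] at h2
  rw [neg_smul, ← h2]; abel

/-- Extreme quantiles escape to infinity: on a closed ball the continuous function
`q ↦ E⟨(q - X) / ‖q - X‖, u⟩` is bounded away from `1`, while it equals `α` at `q α`. -/
lemma tendsto_norm_atTop (hX : Measurable X) (hatoms : NullSingletonClass (Measure.map X ℙ))
    (hline : ¬ ∃ a b : EuclideanSpace ℝ (Fin d), ∀ᵐ ω, ∃ t : ℝ, X ω = a + t • b)
    {u : EuclideanSpace ℝ (Fin d)} (hu : ‖u‖ = 1) {q : ℝ → EuclideanSpace ℝ (Fin d)}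
    (hstat : ∀ α ∈ Set.Ioo (0 : ℝ) 1, ∫ ω, unitDir (q α) (X ω) = α • u) :
    Tendsto (fun α => ‖q α‖) (nhdsWithin 1 (Set.Iio 1)) atTop := by
  have hcont : Continuous fun p => ∫ ω, ⟪unitDir p (X ω), u⟫ := by
    refine continuous_iff_continuousAt.2 fun p => ?_
    refine continuousAt_of_dominated (bound := fun _ => 1)
      (.of_forall fun p' => ((integrable_unitDir hX p').inner_const u).aestronglyMeasurable)
      (.of_forall fun p' => .of_forall fun ω => ?_) (integrable_const _)
      ((ae_ne_of_noAtoms hX hatoms p).mono fun ω hω =>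
        (continuousAt_unitDir hω).inner continuousAt_const)
    refine (norm_inner_le_norm _ _).trans ?_
    rw [hu, mul_one]; exact norm_unitDir_le _ _
  refine tendsto_atTop.2 fun R => ?_
  by_cases hR : R < 0
  · exact .of_forall fun α => hR.le.trans (norm_nonneg _)
  obtain ⟨p, -, hp⟩ := (isCompact_closedBall (0 : EuclideanSpace ℝ (Fin d)) R).exists_isMaxOn
    ⟨0, by simpa using hR⟩ hcont.continuousOn
  have hlt := integral_inner_unitDir_lt_one hX hline hu p
  have e1 : ∀ᶠ α : ℝ in nhdsWithin 1 (Set.Iio 1), ∫ ω, ⟪unitDir p (X ω), u⟫ < α :=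
    mem_nhdsWithin_of_mem_nhds (Ioi_mem_nhds hlt)
  have e2 : ∀ᶠ α : ℝ in nhdsWithin 1 (Set.Iio 1), α ∈ Set.Ioo (0 : ℝ) 1 :=
    Ioo_mem_nhdsLT one_pos
  filter_upwards [e1, e2] with α h1 h2
  by_contra! hcon
  have h3 := hp (show q α ∈ Metric.closedBall 0 R by simpa using hcon.le)
  have h4 : ∫ ω, ⟪unitDir (q α) (X ω), u⟫ = α := by
    calc ∫ ω, ⟪unitDir (q α) (X ω), u⟫ = ⟪∫ ω, unitDir (q α) (X ω), u⟫ := by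
          rw [real_inner_comm, ← integral_inner (integrable_unitDir hX _)]
          simp_rw [real_inner_comm u]
      _ = α := by
          rw [hstat α h2, real_inner_smul_left, real_inner_self_eq_norm_sq, hu]; ring
  have h5 : ∫ ω, ⟪unitDir (q α) (X ω), u⟫ ≤ ∫ ω, ⟪unitDir p (X ω), u⟫ := h3
  linarith

end Stationarity

/-! ### Scalar asymptotics -/

section ScalarExpansion

/-- Uniform cubic domination of the rescaled second-order remainder of `1 - cos`, where
`y / N = cos` of the angle between `q - X` and `u`. -/
lemma abs_remainder_le {a m y N P : ℝ} (ha : 0 < a) (hm : 0 ≤ m) (hy : |y - a| ≤ m)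
    (hNa : |N - a| ≤ m) (hP0 : 0 ≤ P) (hPm : P ≤ m ^ 2) (hN0 : 0 ≤ N) (hN : N ^ 2 = y ^ 2 + P) :
    |a ^ 3 * (1 - y / N) - a * P / 2| ≤ 17 * m ^ 3 := by
  have hyN : |y| ≤ N := abs_le_of_sq_le_sq (by linarith) hN0
  have hdiv : |y / N| ≤ 1 := by
    rw [abs_div, abs_of_nonneg hN0]; exact div_le_one_of_le₀ hyN hN0
  obtain ⟨d1, d2⟩ := abs_le.1 hdiv
  obtain ⟨y1, y2⟩ := abs_le.1 hy
  obtain ⟨n1, n2⟩ := abs_le.1 hNa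
  rcases le_or_gt a (2 * m) with h | h
  · -- `a ≤ 2m`: the two terms are bounded separately
    have b1 : a ^ 3 ≤ 8 * m ^ 3 := by
      calc a ^ 3 ≤ (2 * m) ^ 3 := by gcongr
        _ = _ := by ring
    have b2 : a * P ≤ 2 * m * m ^ 2 := by gcongr
    have b3 : 0 ≤ a * P := by positivity
    have b4 : 0 ≤ a ^ 3 := by positivity
    rw [abs_le]
    constructor <;> nlinarith [mul_nonneg b4 (sub_nonneg.2 d2), mul_nonneg b4 (by linarith : 0 ≤ 1 + y / N)]
  · -- `2m < a`: both `y` and `N` lie in `[a/2, 3a/2]`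
    have hNp : 0 < N := by linarith
    have hyp : 0 < y := by linarith
    have e : a ^ 3 * (1 - y / N) - a * P / 2 =
        a * P * ((a - N) * (a + N) + a * (a - N) + N * (a - y)) / (2 * N * (N + y)) := by
      have hP : P = (N - y) * (N + y) := by linarith
      rw [hP]; field_simp; ring
    have hden : a ^ 2 ≤ 2 * N * (N + y) := by nlinarith
    have hnum : |(a - N) * (a + N) + a * (a - N) + N * (a - y)| ≤ 5 * a * m := by
      have t1 : |(a - N) * (a + N)| ≤ m * (5 / 2 * a) := by
        rw [abs_mul, abs_sub_comm, abs_of_pos (by linarith : 0 < a + N)]; gcongr; linarith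
      have t2 : |a * (a - N)| ≤ a * m := by
        rw [abs_mul, abs_sub_comm, abs_of_pos ha]; gcongr
      have t3 : |N * (a - y)| ≤ 3 / 2 * a * m := by
        rw [abs_mul, abs_sub_comm a y, abs_of_pos hNp]; gcongr; linarith
      have s1 := abs_add_le ((a - N) * (a + N) + a * (a - N)) (N * (a - y))
      have s2 := abs_add_le ((a - N) * (a + N)) (a * (a - N))
      linarith
    rw [e, abs_div, abs_of_pos (by positivity : 0 < 2 * N * (N + y)), div_le_iff₀ (by positivity),
      abs_mul, abs_of_nonneg (by positivity : 0 ≤ a * P)]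
    calc a * P * |(a - N) * (a + N) + a * (a - N) + N * (a - y)|
        ≤ a * m ^ 2 * (5 * a * m) := by gcongr
      _ = 5 * m ^ 3 * a ^ 2 := by ring
      _ ≤ 17 * m ^ 3 * (2 * N * (N + y)) := by gcongr; norm_num

/-- Pointwise limit of the rescaled remainder: with height `a - x` and squared transverse
distance `P → P∞`, the next term in the expansion of `a³ (1 - cos)` is `x P∞`. -/
lemma tendsto_remainder {ι : Type*} {l : Filter ι} {a P N : ι → ℝ} {x p : ℝ}
    (ha : Tendsto a l atTop) (hP : Tendsto P l (nhds p)) (hN0 : ∀ i, 0 ≤ N i)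
    (hN : ∀ i, N i ^ 2 = (a i - x) ^ 2 + P i) :
    Tendsto (fun i => a i ^ 3 * (1 - (a i - x) / N i) - a i * P i / 2) l (nhds (x * p)) := by
  have hinv : Tendsto (fun i => (a i)⁻¹) l (nhds 0) := tendsto_inv_atTop_zero.comp ha
  have hpos : ∀ᶠ i in l, 0 < a i := ha.eventually_gt_atTop 0
  have hposx : ∀ᶠ i in l, x < a i := ha.eventually_gt_atTop x
  -- `η = (a - x) / a` and `n = N / a` tend to `1`, at the rates `a (1 - η) = x`, `a (1 - n) → x`
  have hη : Tendsto (fun i => 1 - x * (a i)⁻¹) l (nhds 1) := by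
    simpa using (hinv.const_mul x).const_sub 1
  have hn : Tendsto (fun i => N i * (a i)⁻¹) l (nhds 1) := by
    have h1 : Tendsto (fun i => √((1 - x * (a i)⁻¹) ^ 2 + P i * (a i)⁻¹ * (a i)⁻¹)) l (nhds 1) := by
      have := ((hη.pow 2).add ((hP.mul hinv).mul hinv)).sqrt
      simpa using this
    refine h1.congr' ?_
    filter_upwards [hpos] with i hi
    have h2 : (1 - x * (a i)⁻¹) ^ 2 + P i * (a i)⁻¹ * (a i)⁻¹ = (N i * (a i)⁻¹) ^ 2 := by
      have h3 : P i = N i ^ 2 - (a i - x) ^ 2 := by linarith [hN i]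
      rw [h3]; field_simp; ring
    rw [h2, Real.sqrt_sq (mul_nonneg (hN0 i) (inv_nonneg.2 hi.le))]
  have hrate : Tendsto (fun i => a i * (1 - N i * (a i)⁻¹)) l (nhds x) := by
    have h1 : Tendsto (fun i => (2 * x - x * x * (a i)⁻¹ - P i * (a i)⁻¹) / (1 + N i * (a i)⁻¹)) l
        (nhds ((2 * x - x * x * 0 - p * 0) / (1 + 1))) :=
      ((hinv.const_mul (x * x)).const_sub (2 * x) |>.sub (hP.mul hinv)).div (hn.const_add 1)
        (by norm_num)
    have e : (2 * x - x * x * 0 - p * 0) / (1 + 1) = x := by ring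
    rw [e] at h1
    refine h1.congr' ?_
    filter_upwards [hpos] with i hi
    have := hN0 i
    have h2 : P i = N i ^ 2 - (a i - x) ^ 2 := by linarith [hN i]
    rw [h2]
    field_simp
    ring
  have hmain : Tendsto (fun i => P i * (a i * (1 - N i * (a i)⁻¹) * (1 + N i * (a i)⁻¹)
      + a i * (1 - N i * (a i)⁻¹) + N i * (a i)⁻¹ * x) /
        (2 * (N i * (a i)⁻¹) * (N i * (a i)⁻¹ + (1 - x * (a i)⁻¹)))) l
      (nhds (p * (x * (1 + 1) + x + 1 * x) / (2 * 1 * (1 + 1)))) :=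
    (hP.mul (((hrate.mul (hn.const_add 1)).add hrate).add (hn.mul_const x))).div
      ((hn.const_mul 2).mul (hn.add hη)) (by norm_num)
  have e : p * (x * (1 + 1) + x + 1 * x) / (2 * 1 * (1 + 1)) = x * p := by ring
  rw [e] at hmain
  refine hmain.congr' ?_
  filter_upwards [hpos, hposx, hn.eventually_const_lt (zero_lt_one)] with i hi hxi hni
  have hNp : 0 < N i := pos_of_mul_pos_left hni (inv_nonneg.2 hi.le)
  have hs : 0 < N i + (a i - x) := by linarith
  have h2 : P i = (N i - (a i - x)) * (N i + (a i - x)) := by linarith [hN i]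
  have h3 : N i * (a i)⁻¹ + (1 - x * (a i)⁻¹) = (N i + (a i - x)) / a i := by field_simp
  rw [h3, h2]
  field_simp
  ring

/-- Passage from the height `a` to the norm `r = √(a² + β²)`: a bounded transverse part `β` and an
error `e = o(1/a)` in the second-order coefficient do not affect the third-order limit. -/
lemma tendsto_of_height {ι : Type*} {l : Filter ι} {a r β δ e : ι → ℝ} {B C L : ℝ}
    (ha : Tendsto a l atTop) (hr0 : ∀ i, 0 ≤ r i) (hr : ∀ i, r i ^ 2 = a i ^ 2 + β i ^ 2)
    (hβ : ∀ᶠ i in l, |β i| ≤ B) (he : Tendsto (fun i => a i * e i) l (nhds 0))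
    (hL : Tendsto (fun i => a i ^ 3 * δ i - a i * (C + e i) / 2) l (nhds L)) :
    Tendsto (fun i => r i * (r i ^ 2 * δ i - 1 / 2 * C)) l (nhds L) := by
  have hinv : Tendsto (fun i => (a i)⁻¹) l (nhds 0) := tendsto_inv_atTop_zero.comp ha
  have hpos : ∀ᶠ i in l, 0 < a i := ha.eventually_gt_atTop 0
  have hβinv : Tendsto (fun i => (a i)⁻¹ * β i) l (nhds 0) :=
    hinv.zero_mul_isBoundedUnder_le ⟨B, by simpa using hβ⟩
  have hn : Tendsto (fun i => r i * (a i)⁻¹) l (nhds 1) := by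
    have h1 : Tendsto (fun i => √(1 + ((a i)⁻¹ * β i) ^ 2)) l (nhds 1) := by
      simpa using ((hβinv.pow 2).const_add 1).sqrt
    refine h1.congr' ?_
    filter_upwards [hpos] with i hi
    have h2 : 1 + ((a i)⁻¹ * β i) ^ 2 = (r i * (a i)⁻¹) ^ 2 := by
      rw [mul_pow (r i), hr]; field_simp
    rw [h2, Real.sqrt_sq (mul_nonneg (hr0 i) (inv_nonneg.2 hi.le))]
  have hM : Tendsto (fun i => a i ^ 3 * δ i - a i * C / 2) l (nhds L) := by
    have := hL.add (he.div_const 2)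
    simp only [zero_div, add_zero] at this
    exact this.congr fun i => by ring
  have hδ : Tendsto (fun i => a i * δ i) l (nhds 0) := by
    have := (hM.mul (hinv.pow 2)).add (hinv.mul_const (C / 2))
    simp only [ne_eq, OfNat.ofNat_ne_zero, not_false_eq_true, zero_pow, mul_zero, zero_mul,
      add_zero] at this
    refine this.congr' ?_
    filter_upwards [hpos] with i hi
    field_simp
    ring
  have hδβ : Tendsto (fun i => a i * δ i * β i ^ 2) l (nhds 0) := by
    refine hδ.zero_mul_isBoundedUnder_le ⟨B ^ 2, ?_⟩
    rw [eventually_map]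
    filter_upwards [hβ] with i hi
    simp only [Function.comp, norm_pow, Real.norm_eq_abs]
    gcongr
  have hfin := (hn.mul hM).add (hn.mul hδβ)
  simp only [one_mul, mul_zero, add_zero] at hfin
  refine hfin.congr' ?_
  filter_upwards [hpos] with i hi
  rw [hr]
  field_simp
  ring

end ScalarExpansion

/-! ### Transverse parts -/

section Transverse

variable {F : Type*} [NormedAddCommGroup F] [InnerProductSpace ℝ F]

/-- The transverse part `v - ⟨v, u⟩ u` of a vector `v` relative to `u`; for a unit vector `u` it is
the orthogonal projection of `v` onto the hyperplane orthogonal to `u`. -/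
noncomputable def transverse (u : F) : F →L[ℝ] F :=
  ContinuousLinearMap.id ℝ F - (innerSL ℝ u).smulRight u

lemma transverse_apply (u v : F) : transverse u v = v - ⟪v, u⟫ • u := by
  simp [transverse, real_inner_comm]

variable {u : F}

lemma inner_self_of_unit (hu : ‖u‖ = 1) : ⟪u, u⟫ = 1 := by rw [real_inner_self_eq_norm_sq, hu]; norm_num

lemma transverse_self (hu : ‖u‖ = 1) : transverse u u = 0 := by
  rw [transverse_apply, inner_self_of_unit hu, one_smul, sub_self]

lemma norm_sq_eq_transverse (hu : ‖u‖ = 1) (v : F) : ‖v‖ ^ 2 = ⟪v, u⟫ ^ 2 + ‖transverse u v‖ ^ 2 := by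
  rw [transverse_apply, norm_sub_sq_real, real_inner_smul_right, norm_smul, hu, Real.norm_eq_abs,
    mul_one, sq_abs]
  ring

lemma norm_transverse_le (hu : ‖u‖ = 1) (v : F) : ‖transverse u v‖ ≤ ‖v‖ := by
  have := norm_sq_eq_transverse hu v
  nlinarith [norm_nonneg v, norm_nonneg (transverse u v), sq_nonneg ⟪v, u⟫]

lemma abs_inner_le (hu : ‖u‖ = 1) (v : F) : |⟪v, u⟫| ≤ ‖v‖ := by
  simpa [hu] using abs_real_inner_le_norm v u

lemma inner_transverse_transverse (hu : ‖u‖ = 1) (v w : F) :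
    ⟪transverse u v, transverse u w⟫ = ⟪v, transverse u w⟫ := by
  simp only [transverse_apply, inner_sub_left, inner_sub_right, real_inner_smul_left,
    real_inner_smul_right, inner_self_of_unit hu, real_inner_comm u]
  ring

end Transverse

/-! ### Moment identities -/

section Moments

variable {d : ℕ} {Ω : Type*} [MeasureSpace Ω] {X : Ω → EuclideanSpace ℝ (Fin d)}

lemma integral_inner_const {f : Ω → EuclideanSpace ℝ (Fin d)} (hf : Integrable f)
    (v : EuclideanSpace ℝ (Fin d)) : ∫ ω, ⟪f ω, v⟫ = ⟪∫ ω, f ω, v⟫ := by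
  rw [real_inner_comm, ← integral_inner hf]
  simp_rw [real_inner_comm v]

variable [IsProbabilityMeasure (ℙ : Measure Ω)]

lemma integrable_add_norm_pow (hX : Measurable X) (hmom : Integrable (fun ω => ‖X ω‖ ^ 3))
    (B : ℝ) {k : ℕ} (hk : k ≤ 3) : Integrable fun ω => (B + ‖X ω‖) ^ k := by
  have h3 : MemLp X 3 := by
    refine (integrable_norm_rpow_iff hX.aestronglyMeasurable (by norm_num) (by norm_num)).1 ?_
    have e : (3 : ENNReal).toReal = (3 : ℕ) := by norm_num
    simpa only [e, Real.rpow_natCast] using hmom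
  have hB : MemLp (fun ω => B + ‖X ω‖) 3 := (memLp_const B).add h3.norm
  have hBk : MemLp (fun ω => B + ‖X ω‖) (k : ℕ) := hB.mono_exponent (by exact_mod_cast hk)
  rcases Nat.eq_zero_or_pos k with rfl | h0
  · simp
  refine (hBk.integrable_norm_pow h0.ne').mono' ?_ (.of_forall fun ω => ?_)
  · exact ((measurable_const.add hX.norm).pow_const k).aestronglyMeasurable
  · rw [norm_pow]

/-- A measurable function of at most cubic growth in `X` is integrable. -/
lemma integrable_of_cubic (hX : Measurable X) (hmom : Integrable (fun ω => ‖X ω‖ ^ 3))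
    {G : Type*} [NormedAddCommGroup G] {f : Ω → G} (hf : AEStronglyMeasurable f ℙ) (K B : ℝ)
    (hfb : ∀ ω, ‖f ω‖ ≤ K * (B + ‖X ω‖) ^ 3) : Integrable f :=
  ((integrable_add_norm_pow hX hmom B le_rfl).const_mul K).mono' hf (.of_forall hfb)

lemma integrable_self (hX : Measurable X) (hmom : Integrable (fun ω => ‖X ω‖ ^ 3)) :
    Integrable X := by
  refine (integrable_norm_iff hX.aestronglyMeasurable).1 ?_
  simpa using integrable_add_norm_pow hX hmom 0 (k := 1) (by norm_num)

lemma integrable_inner_smul (hX : Measurable X) (hmom : Integrable (fun ω => ‖X ω‖ ^ 3))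
    {u : EuclideanSpace ℝ (Fin d)} (hu : ‖u‖ = 1) : Integrable fun ω => ⟪X ω, u⟫ • X ω := by
  refine (integrable_add_norm_pow hX hmom 0 (k := 2) (by norm_num)).mono'
    (by fun_prop) (.of_forall fun ω => ?_)
  rw [norm_smul, Real.norm_eq_abs, zero_add, sq]
  exact mul_le_mul_of_nonneg_right (abs_inner_le hu _) (norm_nonneg _)

lemma integrable_norm_sub_sq (hX : Measurable X) (hmom : Integrable (fun ω => ‖X ω‖ ^ 3))
    (v : EuclideanSpace ℝ (Fin d)) : Integrable fun ω => ‖X ω - v‖ ^ 2 := by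
  refine (integrable_add_norm_pow hX hmom ‖v‖ (k := 2) (by norm_num)).mono'
    (by fun_prop) (.of_forall fun ω => ?_)
  rw [norm_pow, norm_norm]
  gcongr
  exact (norm_sub_le _ _).trans (add_comm _ _).le

/-- `Σu = E[⟨X, u⟩ X] - ⟨μ, u⟩ μ`. -/
lemma covOp_eq (hX : Measurable X) (hmom : Integrable (fun ω => ‖X ω‖ ^ 3))
    {u : EuclideanSpace ℝ (Fin d)} (hu : ‖u‖ = 1) :
    covOp X u = (∫ ω, ⟪X ω, u⟫ • X ω) - ⟪meanVec X, u⟫ • meanVec X := by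
  have h1 := integrable_self hX hmom
  have h2 := integrable_inner_smul hX hmom hu
  have h3 : Integrable fun ω => ⟪X ω, u⟫ • meanVec X := (h1.inner_const u).smul_const _
  have hc : Integrable fun ω => X ω - meanVec X := h1.sub (integrable_const _)
  have h4 : Integrable fun ω => ⟪meanVec X, u⟫ • (X ω - meanVec X) :=
    hc.smul ⟪meanVec X, u⟫
  have e : ∀ ω, ⟪X ω - meanVec X, u⟫ • (X ω - meanVec X) =
      ⟪X ω, u⟫ • X ω - ⟪X ω, u⟫ • meanVec X - ⟪meanVec X, u⟫ • (X ω - meanVec X) := fun ω => by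
    rw [inner_sub_left, sub_smul, smul_sub]
  have hm : ∫ ω, X ω = meanVec X := rfl
  rw [covOp]
  simp_rw [e]
  have h23 : Integrable fun ω => ⟪X ω, u⟫ • X ω - ⟪X ω, u⟫ • meanVec X := h2.sub h3
  rw [integral_sub h23 h4, integral_sub h2 h3, integral_smul_const, integral_smul,
    integral_sub h1 (integrable_const _), integral_inner_const h1, hm]
  simp

/-- The total variance of the transverse part of `X` is `tr Σ - ⟨Σu, u⟩`. -/
lemma integral_transverse_sq (hX : Measurable X) (hmom : Integrable (fun ω => ‖X ω‖ ^ 3))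
    {u : EuclideanSpace ℝ (Fin d)} (hu : ‖u‖ = 1) :
    ∫ ω, ‖transverse u (X ω - meanVec X)‖ ^ 2 = covTrace X - ⟪covOp X u, u⟫ := by
  have h2 := integrable_norm_sub_sq hX hmom (meanVec X)
  have h4 : Integrable fun ω => ⟪X ω - meanVec X, u⟫ • (X ω - meanVec X) := by
    refine h2.mono' (by fun_prop) (.of_forall fun ω => ?_)
    rw [norm_smul, Real.norm_eq_abs, sq]
    exact mul_le_mul_of_nonneg_right (abs_inner_le hu _) (norm_nonneg _)
  rw [covTrace, covOp, ← integral_inner_const h4, ← integral_sub h2 (h4.inner_const u)]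
  refine integral_congr_ae (.of_forall fun ω => ?_)
  simp only [real_inner_smul_left]
  linarith [norm_sq_eq_transverse hu (X ω - meanVec X)]

/-- The transverse second moment about the transverse part of an arbitrary point
(parallel axis identity). -/
lemma integral_sub_transverse_sq (hX : Measurable X) (hmom : Integrable (fun ω => ‖X ω‖ ^ 3))
    {u : EuclideanSpace ℝ (Fin d)} (hu : ‖u‖ = 1) (v : EuclideanSpace ℝ (Fin d)) :
    ∫ ω, ‖transverse u (v - X ω)‖ ^ 2 =
      covTrace X - ⟪covOp X u, u⟫ + ‖transverse u (v - meanVec X)‖ ^ 2 := by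
  have h1 := integrable_self hX hmom
  have h2 : Integrable fun ω => ‖transverse u (X ω - meanVec X)‖ ^ 2 := by
    refine (integrable_norm_sub_sq hX hmom (meanVec X)).mono' (by fun_prop) (.of_forall fun ω => ?_)
    rw [norm_pow, norm_norm]
    gcongr
    exact norm_transverse_le hu _
  have hc : Integrable fun ω => X ω - meanVec X := h1.sub (integrable_const _)
  have h3 : Integrable fun ω => transverse u (X ω - meanVec X) :=
    (transverse u).integrable_comp hc
  have h0 : ∫ ω, transverse u (X ω - meanVec X) = 0 := by
    have hm : ∫ ω, X ω = meanVec X := rfl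
    rw [(transverse u).integral_comp_comm hc,
      integral_sub h1 (integrable_const _), hm]
    simp
  have e : ∀ ω, ‖transverse u (v - X ω)‖ ^ 2 = ‖transverse u (X ω - meanVec X)‖ ^ 2
      - 2 * ⟪transverse u (X ω - meanVec X), transverse u (v - meanVec X)⟫
      + ‖transverse u (v - meanVec X)‖ ^ 2 := fun ω => by
    rw [← norm_sub_sq_real, ← map_sub, ← norm_neg, ← map_neg]
    congr 3
    abel
  simp_rw [e]
  have h5 : Integrable fun ω =>
      2 * ⟪transverse u (X ω - meanVec X), transverse u (v - meanVec X)⟫ :=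
    (h3.inner_const (𝕜 := ℝ) _).const_mul 2
  have h25 : Integrable fun ω => ‖transverse u (X ω - meanVec X)‖ ^ 2
      - 2 * ⟪transverse u (X ω - meanVec X), transverse u (v - meanVec X)⟫ := h2.sub h5
  rw [integral_add h25 (integrable_const _), integral_sub h2 h5, integral_const_mul,
    integral_inner_const h3, h0, integral_transverse_sq hX hmom hu]
  simp

/-- The third-order limit in centred form agrees with its expansion in raw moments. -/
lemma integral_third_moment (hX : Measurable X) (hmom : Integrable (fun ω => ‖X ω‖ ^ 3))
    {u : EuclideanSpace ℝ (Fin d)} (hu : ‖u‖ = 1) :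
    ∫ ω, ⟪X ω, u⟫ * ‖transverse u (meanVec X - X ω)‖ ^ 2 =
      (∫ ω, ⟪X ω, u⟫ * ‖X ω - ⟪X ω, u⟫ • u‖ ^ 2) -
        ⟪(2 : ℝ) • covOp X u + ⟪meanVec X, u⟫ • meanVec X, meanVec X - ⟪meanVec X, u⟫ • u⟫ := by
  simp_rw [← transverse_apply]
  set μ := meanVec X with hμ
  have h1 := integrable_self hX hmom
  have h2 := integrable_inner_smul hX hmom hu
  have h3 : Integrable fun ω => ⟪X ω, u⟫ * ‖transverse u (X ω)‖ ^ 2 := by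
    refine integrable_of_cubic hX hmom (by fun_prop) 1 0 fun ω => ?_
    rw [norm_mul, norm_pow, norm_norm, Real.norm_eq_abs, zero_add, one_mul]
    calc _ ≤ ‖X ω‖ * ‖X ω‖ ^ 2 := by
          gcongr
          exacts [abs_inner_le hu _, norm_transverse_le hu _]
      _ = _ := by ring
  have e : ∀ ω, ⟪X ω, u⟫ * ‖transverse u (μ - X ω)‖ ^ 2 = ⟪X ω, u⟫ * ‖transverse u (X ω)‖ ^ 2
      - 2 * ⟪⟪X ω, u⟫ • X ω, transverse u μ⟫ + ⟪X ω, u⟫ * ‖transverse u μ‖ ^ 2 := fun ω => by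
    rw [map_sub, norm_sub_sq_real, real_inner_comm (transverse u (X ω)), inner_transverse_transverse hu,
      real_inner_smul_left]
    ring
  have hm : ∫ ω, X ω = μ := rfl
  simp_rw [e]
  have h4 : Integrable fun ω => 2 * ⟪⟪X ω, u⟫ • X ω, transverse u μ⟫ :=
    (h2.inner_const (𝕜 := ℝ) _).const_mul 2
  have h5 : Integrable fun ω => ⟪X ω, u⟫ * ‖transverse u μ‖ ^ 2 := (h1.inner_const u).mul_const _
  have h34 : Integrable fun ω => ⟪X ω, u⟫ * ‖transverse u (X ω)‖ ^ 2
      - 2 * ⟪⟪X ω, u⟫ • X ω, transverse u μ⟫ := h3.sub h4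
  rw [integral_add h34 h5, integral_sub h3 h4, integral_const_mul, integral_mul_const,
    integral_inner_const h2, integral_inner_const h1, hm, covOp_eq hX hmom hu, ← hμ,
    ← real_inner_self_eq_norm_sq, inner_transverse_transverse hu]
  simp only [inner_add_left, inner_sub_left, real_inner_smul_left]
  ring

end Moments

/-! ### Geometry of extreme quantiles -/

section Quantiles

variable {d : ℕ} {Ω : Type*} [MeasureSpace Ω] [IsProbabilityMeasure (ℙ : Measure Ω)]
  {X : Ω → EuclideanSpace ℝ (Fin d)}

/-- At an extreme quantile, `q` stays within a bounded distance of `‖q‖ α u`. -/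
lemma norm_smul_sub_quantile_le (hX : Measurable X) (hmom : Integrable (fun ω => ‖X ω‖ ^ 3))
    {α : ℝ} {u q : EuclideanSpace ℝ (Fin d)} (hstat : ∫ ω, unitDir q (X ω) = α • u) :
    ‖‖q‖ • α • u - q‖ ≤ 2 * ∫ ω, ‖X ω‖ := by
  have hU := integrable_unitDir hX q
  have hU' : Integrable fun ω => ‖q‖ • unitDir q (X ω) := hU.smul ‖q‖
  have e : ‖q‖ • α • u - q = ∫ ω, (‖q‖ • unitDir q (X ω) - q) := by
    rw [integral_sub hU' (integrable_const _), integral_smul, hstat]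
    simp
  rw [e, ← integral_const_mul]
  exact norm_integral_le_of_norm_le ((integrable_self hX hmom).norm.const_mul 2)
    (.of_forall fun ω => norm_smul_unitDir_sub_le q (X ω))

lemma transverse_unitDir (u q x : EuclideanSpace ℝ (Fin d)) :
    ‖q - x‖ • transverse u (unitDir q x) = transverse u (q - x) := by
  rcases eq_or_ne (q - x) 0 with h | h
  · simp [h]
  · rw [← map_smul, unitDir, smul_smul, mul_inv_cancel₀ (norm_ne_zero_iff.2 h), one_smul]

lemma norm_transverse_sub_le {u : EuclideanSpace ℝ (Fin d)} (hu : ‖u‖ = 1) {B : ℝ}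
    {q : EuclideanSpace ℝ (Fin d)} (hb : ‖transverse u q‖ ≤ B) (x : EuclideanSpace ℝ (Fin d)) :
    ‖transverse u (q - x)‖ ≤ B + ‖x‖ := by
  rw [map_sub]
  exact (norm_sub_le _ _).trans (add_le_add hb (norm_transverse_le hu x))

lemma abs_norm_sub_height_le {u : EuclideanSpace ℝ (Fin d)} (hu : ‖u‖ = 1) {B : ℝ}
    {q : EuclideanSpace ℝ (Fin d)} (hb : ‖transverse u q‖ ≤ B) (ha : 0 ≤ ⟪q, u⟫)
    (x : EuclideanSpace ℝ (Fin d)) : |‖q - x‖ - ⟪q, u⟫| ≤ B + ‖x‖ := by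
  have h1 : ‖⟪q, u⟫ • u‖ = ⟪q, u⟫ := by
    rw [norm_smul, hu, mul_one, Real.norm_eq_abs, abs_of_nonneg ha]
  have h2 := abs_norm_sub_norm_le (q - x) (⟪q, u⟫ • u)
  rw [h1] at h2
  have e : q - x - ⟪q, u⟫ • u = transverse u q - x := by rw [transverse_apply]; abel
  rw [e] at h2
  exact h2.trans ((norm_sub_le _ _).trans (by gcongr))

/-- The transverse part of a quantile at height `a` lies within `O(1/a)` of that of the mean: the
transverse stationarity equation says that the average of `(q - X)_⊥ / ‖q - X‖` vanishes, and
replacing the weight `1 / ‖q - X‖` by `1 / a` costs `O(1/a²)`. -/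
lemma height_mul_norm_transverse_sub_le (hX : Measurable X)
    (hmom : Integrable (fun ω => ‖X ω‖ ^ 3)) {α B : ℝ} {u q : EuclideanSpace ℝ (Fin d)}
    (hu : ‖u‖ = 1) (hstat : ∫ ω, unitDir q (X ω) = α • u) (hb : ‖transverse u q‖ ≤ B)
    (ha : 0 ≤ ⟪q, u⟫) :
    ⟪q, u⟫ * ‖transverse u (q - meanVec X)‖ ≤ 2 * ∫ ω, (B + ‖X ω‖) ^ 2 := by
  set a := ⟪q, u⟫ with ha_def
  have hU := integrable_unitDir hX q
  have hTU : Integrable fun ω => transverse u (unitDir q (X ω)) := (transverse u).integrable_comp hU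
  have hTU0 : ∫ ω, transverse u (unitDir q (X ω)) = 0 := by
    rw [(transverse u).integral_comp_comm hU, hstat, map_smul, transverse_self hu, smul_zero]
  have h1 := integrable_self hX hmom
  have hc : Integrable fun ω => q - X ω := (integrable_const _).sub h1
  have hTc : Integrable fun ω => transverse u (q - X ω) := (transverse u).integrable_comp hc
  have hTc0 : ∫ ω, transverse u (q - X ω) = transverse u (q - meanVec X) := by
    rw [(transverse u).integral_comp_comm hc, integral_sub (integrable_const _) h1]
    simp [meanVec]
  have haTU : Integrable fun ω => a • transverse u (unitDir q (X ω)) := hTU.smul a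
  have e : a • transverse u (q - meanVec X) =
      ∫ ω, a • (transverse u (q - X ω) - a • transverse u (unitDir q (X ω))) := by
    rw [integral_smul, integral_sub hTc haTU, integral_smul, hTU0, hTc0, smul_zero, sub_zero]
  have e' : a * ‖transverse u (q - meanVec X)‖ = ‖a • transverse u (q - meanVec X)‖ := by
    rw [norm_smul, Real.norm_eq_abs, abs_of_nonneg ha]
  rw [e', e, ← integral_const_mul]
  refine norm_integral_le_of_norm_le
    ((integrable_add_norm_pow hX hmom B (k := 2) (by norm_num)).const_mul 2)
    (.of_forall fun ω => ?_)
  set w := transverse u (unitDir q (X ω)) with hw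
  have hw1 : ‖w‖ ≤ 1 := (norm_transverse_le hu _).trans (norm_unitDir_le _ _)
  have hp := norm_transverse_sub_le hu hb (X ω)
  have hN := abs_norm_sub_height_le hu hb ha (X ω)
  rw [← ha_def] at hN
  rw [← transverse_unitDir] at hp ⊢
  rw [← hw] at hp ⊢
  have hm0 : 0 ≤ B + ‖X ω‖ := (abs_nonneg _).trans hN
  have haw : ‖a • w‖ ≤ 2 * (B + ‖X ω‖) := by
    have : a • w = ‖q - X ω‖ • w - (‖q - X ω‖ - a) • w := by rw [sub_smul]; abel
    rw [this]
    refine (norm_sub_le _ _).trans ?_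
    rw [norm_smul (‖q - X ω‖ - a), Real.norm_eq_abs]
    nlinarith [mul_le_mul hN hw1 (norm_nonneg w) hm0]
  rw [← sub_smul, smul_comm, norm_smul, Real.norm_eq_abs]
  calc _ ≤ (B + ‖X ω‖) * (2 * (B + ‖X ω‖)) := by gcongr
    _ = _ := by ring

/-- The component of the stationarity equation along `u`: `1 - α` is the mean of `1 - cos`, so the
rescaled remainder below is the integral of the pointwise remainder. -/
lemma integral_remainder (hX : Measurable X) (hmom : Integrable (fun ω => ‖X ω‖ ^ 3))
    {α : ℝ} {u q : EuclideanSpace ℝ (Fin d)} (hu : ‖u‖ = 1)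
    (hstat : ∫ ω, unitDir q (X ω) = α • u) :
    ∫ ω, (⟪q, u⟫ ^ 3 * (1 - (⟪q, u⟫ - ⟪X ω, u⟫) / ‖q - X ω‖)
        - ⟪q, u⟫ * ‖transverse u (q - X ω)‖ ^ 2 / 2) =
      ⟪q, u⟫ ^ 3 * (1 - α) - ⟪q, u⟫ * (covTrace X - ⟪covOp X u, u⟫
        + ‖transverse u (q - meanVec X)‖ ^ 2) / 2 := by
  have hU := integrable_unitDir hX q
  have hUu : Integrable fun ω => ⟪unitDir q (X ω), u⟫ := hU.inner_const u
  have hP : Integrable fun ω => ‖transverse u (q - X ω)‖ ^ 2 := by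
    refine (integrable_norm_sub_sq hX hmom q).mono' (by fun_prop) (.of_forall fun ω => ?_)
    rw [norm_pow, norm_norm, norm_sub_rev]
    gcongr
    exact norm_transverse_le hu _
  have hα : ∫ ω, ⟪unitDir q (X ω), u⟫ = α := by
    rw [integral_inner_const hU, hstat, real_inner_smul_left, inner_self_of_unit hu, mul_one]
  have e : ∀ ω, ⟪q, u⟫ ^ 3 * (1 - (⟪q, u⟫ - ⟪X ω, u⟫) / ‖q - X ω‖)
        - ⟪q, u⟫ * ‖transverse u (q - X ω)‖ ^ 2 / 2 =
      ⟪q, u⟫ ^ 3 * (1 - ⟪unitDir q (X ω), u⟫)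
        - ⟪q, u⟫ / 2 * ‖transverse u (q - X ω)‖ ^ 2 := fun ω => by
    rw [inner_unitDir, inner_sub_left]; ring
  have h1 : Integrable fun ω => ⟪q, u⟫ ^ 3 * (1 - ⟪unitDir q (X ω), u⟫) :=
    ((integrable_const _).sub hUu).const_mul _
  simp_rw [e]
  rw [integral_sub h1 (hP.const_mul _), integral_const_mul, integral_const_mul,
    integral_sub (integrable_const _) hUu, hα, integral_sub_transverse_sq hX hmom hu]
  simp
  ring

end Quantiles

/-! ### The expansion -/

/-- Theorem (third-order expansion): if `E‖X‖³ < ∞`, the law of `X` has no atoms and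
is not supported on a line, then as `α → 1⁻`,
`‖q(α)‖ (‖q(α)‖²(1−α) − ½(tr Σ − ⟨Σu,u⟩))` converges to
`E[⟨X,u⟩ ‖X − ⟨X,u⟩u‖²] − ⟨2Σu + ⟨μ,u⟩μ, μ − ⟨μ,u⟩u⟩`. -/
theorem geometric_quantile_third_order_expansion
    {d : ℕ} (hd : 2 ≤ d)
    {Ω : Type*} [MeasureSpace Ω] [IsProbabilityMeasure (ℙ : Measure Ω)]
    (X : Ω → EuclideanSpace ℝ (Fin d)) (hX : Measurable X)
    (hmom : Integrable (fun ω => ‖X ω‖ ^ 3))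
    (hatoms : NoAtoms (Measure.map X ℙ))
    (hline : ¬ ∃ a b : EuclideanSpace ℝ (Fin d),
      ∀ᵐ ω, ∃ t : ℝ, X ω = a + t • b)
    (u : EuclideanSpace ℝ (Fin d)) (hu : ‖u‖ = 1)
    (q : ℝ → EuclideanSpace ℝ (Fin d))
    (hq : ∀ α ∈ Set.Ioo (0 : ℝ) 1,
      ∀ p : EuclideanSpace ℝ (Fin d), gqObj X α u (q α) ≤ gqObj X α u p) :
    Tendsto
      (fun α : ℝ => ‖q α‖ *
        (‖q α‖ ^ 2 * (1 - α) - (1 / 2) * (covTrace X - ⟪covOp X u, u⟫)))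
      (nhdsWithin 1 (Set.Iio 1))
      (nhds ((∫ ω, ⟪X ω, u⟫ * ‖X ω - ⟪X ω, u⟫ • u‖ ^ 2) -
        ⟪(2 : ℝ) • covOp X u + ⟪meanVec X, u⟫ • meanVec X,
          meanVec X - ⟪meanVec X, u⟫ • u⟫)) := by
  have hstat : ∀ α ∈ Set.Ioo (0 : ℝ) 1, ∫ ω, unitDir (q α) (X ω) = α • u :=
    fun α hα => integral_unitDir_of_minimizer hX hatoms (hq α hα)
  have hr := tendsto_norm_atTop hX hatoms hline hu hstat
  have hIoo : ∀ᶠ α : ℝ in nhdsWithin 1 (Set.Iio 1), α ∈ Set.Ioo (0 : ℝ) 1 :=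
    Ioo_mem_nhdsLT one_pos
  have hhalf : ∀ᶠ α : ℝ in nhdsWithin 1 (Set.Iio 1), α ∈ Set.Ioo (1 / 2 : ℝ) 1 :=
    Ioo_mem_nhdsLT (by norm_num)
  set B : ℝ := 2 * ∫ ω, ‖X ω‖ with hB
  have hBq : ∀ α ∈ Set.Ioo (0 : ℝ) 1, ‖‖q α‖ • α • u - q α‖ ≤ B :=
    fun α hα => norm_smul_sub_quantile_le hX hmom (hstat α hα)
  have hb : ∀ α ∈ Set.Ioo (0 : ℝ) 1, ‖transverse u (q α)‖ ≤ B := fun α hα => by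
    have h := (norm_transverse_le hu _).trans (hBq α hα)
    rwa [map_sub, map_smul, map_smul, transverse_self hu, smul_zero, smul_zero, zero_sub,
      norm_neg] at h
  -- Projecting the bound `hBq` on `u` gives `a ≥ α ‖q‖ - B ≥ ‖q‖ / 2 - B`.
  have ha : Tendsto (fun α => ⟪q α, u⟫) (nhdsWithin 1 (Set.Iio 1)) atTop := by
    have h1 : Tendsto (fun α => 1 / 2 * ‖q α‖ - B) (nhdsWithin 1 (Set.Iio 1)) atTop :=
      tendsto_atTop_add_const_right _ (-B) (hr.const_mul_atTop (by norm_num))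
    refine tendsto_atTop_mono' _ ?_ h1
    filter_upwards [hIoo, hhalf] with α h0 h2
    have h3 := (abs_inner_le hu _).trans (hBq α h0)
    rw [inner_sub_left, real_inner_smul_left, real_inner_smul_left, inner_self_of_unit hu] at h3
    have h4 := (abs_le.1 h3).2
    nlinarith [norm_nonneg (q α), h2.1]
  have ha0 := ha.eventually_ge_atTop 1
  have hinv : Tendsto (fun α => ⟪q α, u⟫⁻¹) (nhdsWithin 1 (Set.Iio 1)) (nhds 0) :=
    tendsto_inv_atTop_zero.comp ha
  obtain ⟨K, hK⟩ : ∃ K, ∀ᶠ α : ℝ in nhdsWithin 1 (Set.Iio 1),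
      ⟪q α, u⟫ * ‖transverse u (q α - meanVec X)‖ ≤ K :=
    ⟨2 * ∫ ω, (B + ‖X ω‖) ^ 2, by
      filter_upwards [hIoo, ha0] with α h0 h1
      exact height_mul_norm_transverse_sub_le hX hmom hu (hstat α h0) (hb α h0)
        (zero_le_one.trans h1)⟩
  have hbμ : Tendsto (fun α => ‖transverse u (q α - meanVec X)‖) (nhdsWithin 1 (Set.Iio 1))
      (nhds 0) := by
    have h1 : Tendsto (fun α => K * ⟪q α, u⟫⁻¹) (nhdsWithin 1 (Set.Iio 1)) (nhds 0) := by
      simpa using hinv.const_mul K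
    refine squeeze_zero' (.of_forall fun α => norm_nonneg _) ?_ h1
    filter_upwards [hK, ha0] with α h2 h3
    rw [← div_eq_mul_inv, le_div_iff₀ (zero_lt_one.trans_le h3), mul_comm]
    exact h2
  have he : Tendsto (fun α => ⟪q α, u⟫ * ‖transverse u (q α - meanVec X)‖ ^ 2)
      (nhdsWithin 1 (Set.Iio 1)) (nhds 0) := by
    have h1 : Tendsto (fun α => K * ‖transverse u (q α - meanVec X)‖)
        (nhdsWithin 1 (Set.Iio 1)) (nhds 0) := by simpa using hbμ.const_mul K
    refine squeeze_zero' ?_ ?_ h1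
    · filter_upwards [ha0] with α h3
      have := zero_le_one.trans h3
      positivity
    · filter_upwards [hK] with α h2
      rw [sq, ← mul_assoc]
      exact mul_le_mul_of_nonneg_right h2 (norm_nonneg _)
  have hTq : Tendsto (fun α => transverse u (q α)) (nhdsWithin 1 (Set.Iio 1))
      (nhds (transverse u (meanVec X))) := by
    rw [tendsto_iff_norm_sub_tendsto_zero]
    simpa only [map_sub] using hbμ
  have hpyth : ∀ α ω, ‖q α - X ω‖ ^ 2 =
      (⟪q α, u⟫ - ⟪X ω, u⟫) ^ 2 + ‖transverse u (q α - X ω)‖ ^ 2 := fun α ω => by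
    rw [norm_sq_eq_transverse hu, inner_sub_left]
  -- Dominated convergence for the remainder of `1 - cos`.
  have hmain := tendsto_integral_filter_of_dominated_convergence
    (l := nhdsWithin (1 : ℝ) (Set.Iio 1)) (μ := (ℙ : Measure Ω))
    (F := fun α ω => ⟪q α, u⟫ ^ 3 * (1 - (⟪q α, u⟫ - ⟪X ω, u⟫) / ‖q α - X ω‖)
        - ⟪q α, u⟫ * ‖transverse u (q α - X ω)‖ ^ 2 / 2)
    (f := fun ω => ⟪X ω, u⟫ * ‖transverse u (meanVec X - X ω)‖ ^ 2)
    (fun ω => 17 * (B + ‖X ω‖) ^ 3)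
    (.of_forall fun α => Measurable.aestronglyMeasurable (by fun_prop))
    (by
      filter_upwards [hIoo, ha0] with α h0 h1
      refine .of_forall fun ω => ?_
      have hm := norm_transverse_sub_le hu (hb α h0) (X ω)
      have hm0 := (norm_nonneg _).trans hm
      refine abs_remainder_le (zero_lt_one.trans_le h1) hm0 ?_
        (abs_norm_sub_height_le hu (hb α h0) (zero_le_one.trans h1) (X ω)) (sq_nonneg _)
        (by gcongr) (norm_nonneg _) (hpyth α ω)
      rw [sub_sub_cancel_left, abs_neg]
      linarith [abs_inner_le hu (X ω), (norm_nonneg _).trans (hb α h0)])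
    ((integrable_add_norm_pow hX hmom B le_rfl).const_mul 17)
    (.of_forall fun ω => by
      refine tendsto_remainder ha ?_ (fun α => norm_nonneg _) (fun α => hpyth α ω)
      simp only [map_sub]
      exact (hTq.sub_const _).norm.pow 2)
  rw [integral_third_moment hX hmom hu] at hmain
  refine tendsto_of_height (β := fun α => ‖transverse u (q α)‖) (B := B) ha
    (fun α => norm_nonneg _) (fun α => norm_sq_eq_transverse hu _) ?_ he (hmain.congr' ?_)
  · filter_upwards [hIoo] with α h0
    rw [abs_of_nonneg (norm_nonneg _)]
    exact hb α h0
  · filter_upwards [hIoo] with α h0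
    exact integral_remainder hX hmom hu (hstat α h0)
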